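/- Suppose y* ∈ C¹_rd(𝕋;ℝⁿ) is a weak local minimizer of the sigma-form functional 𝓛σ[y] = ∫_a^b L(t, y(σ(t)), y^Δ(t)) Δt with the right endpoint free: there is δ > 0 such that 𝓛σ[y*] ≤ 𝓛σ[y] for every y ∈ C¹_rd(𝕋;ℝⁿ) with y(a) = y*(a) and ‖y − y*‖_{1,∞} < δ (no condition at t = b). Then the transversality condition μ(ρ(b))·L_y(ρ(b), y*(b), y*^Δ(ρ(b))) + L_v(ρ(b), y*(b), y*^Δ(ρ(b))) = 0 holds (note σ(ρ(b)) = b). -/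

import Mathlib

open Set Filter

noncomputable section

-- Forward jump operator of the set `S`.
open Classical in
def tsSigma (S : Set ℝ) (t : ℝ) : ℝ :=
  if ({s | s ∈ S ∧ t < s}).Nonempty then sInf {s | s ∈ S ∧ t < s} else t

-- Backward jump operator of the set `S`.
open Classical in
def tsRho (S : Set ℝ) (t : ℝ) : ℝ :=
  if ({s | s ∈ S ∧ s < t}).Nonempty then sSup {s | s ∈ S ∧ s < t} else t

/-- Graininess function. -/
def tsMu (S : Set ℝ) (t : ℝ) : ℝ := tsSigma S t - t

/-- `S^k = S \ (ρ(max S), max S]`. -/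
def tsTk (S : Set ℝ) : Set ℝ := S \ Set.Ioc (tsRho S (sSup S)) (sSup S)

/-- Delta differentiability at `t` of `f` regarded as a function on the time scale `S`,
with delta derivative `d`. -/
def deltaDiffAt {E : Type*} [NormedAddCommGroup E] [NormedSpace ℝ E]
    (S : Set ℝ) (f : ℝ → E) (t : ℝ) (d : E) : Prop :=
  ∀ ε > 0, ∃ δ > 0, ∀ s ∈ S ∩ Set.Ioo (t - δ) (t + δ),
    ‖f (tsSigma S t) - f s - (tsSigma S t - s) • d‖ ≤ ε * |tsSigma S t - s|

/-- rd-continuity of `f` on its domain `S`: continuity (within `S`) at right-dense points and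
existence of a finite left-sided limit along `S` at left-dense points. -/
def RdContinuousOn {E : Type*} [NormedAddCommGroup E]
    (S : Set ℝ) (f : ℝ → E) : Prop :=
  ∀ t ∈ S, (tsSigma S t = t → ContinuousWithinAt f S t) ∧
    (tsRho S t = t → ∃ l : E, Filter.Tendsto f (nhdsWithin t (S ∩ Set.Iio t)) (nhds l))

/-- `y ∈ C¹_rd(T)`, with delta derivative `yd`. -/
def C1rd {E : Type*} [NormedAddCommGroup E] [NormedSpace ℝ E]
    (T : Set ℝ) (y yd : ℝ → E) : Prop :=
  (∀ t ∈ tsTk T, deltaDiffAt T y t (yd t)) ∧ RdContinuousOn (tsTk T) yd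

/-- `F` is a delta antiderivative of `f` on the time scale `S`; the delta integral
`∫_c^d f Δt` is `F d - F c` for any such `F`. -/
def IsDeltaAntideriv {E : Type*} [NormedAddCommGroup E] [NormedSpace ℝ E]
    (S : Set ℝ) (f F : ℝ → E) : Prop :=
  ∀ t ∈ tsTk S, deltaDiffAt S F t (f t)

/-- Sup norm of `f` over the set `S`. -/
def tsSupNorm {E : Type*} [NormedAddCommGroup E] (S : Set ℝ) (f : ℝ → E) : ℝ :=
  sSup ((fun t => ‖f t‖) '' S)

abbrev En (n : ℕ) : Type := EuclideanSpace ℝ (Fin n)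


structure TSc (T : Set ℝ) (a b : ℝ) : Prop where
  cpt : IsCompact T
  least : IsLeast T a
  great : IsGreatest T b
  lt : a < b

section sig
variable {T : Set ℝ} {a b : ℝ}

lemma sig_ge (S : Set ℝ) (t : ℝ) : t ≤ tsSigma S t := by
  unfold tsSigma
  split_ifs with h
  · exact le_csInf h fun s hs => hs.2.le
  · exact le_rfl

lemma sig_le {S : Set ℝ} {t s : ℝ} (hs : s ∈ S) (h : t < s) : tsSigma S t ≤ s := by
  unfold tsSigma
  rw [if_pos ⟨s, hs, h⟩]
  exact csInf_le ⟨t, fun x hx => hx.2.le⟩ ⟨hs, h⟩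

lemma rho_le (S : Set ℝ) (t : ℝ) : tsRho S t ≤ t := by
  unfold tsRho
  split_ifs with h
  · exact csSup_le h fun s hs => hs.2.le
  · exact le_rfl

lemma le_rho {S : Set ℝ} {t s : ℝ} (hs : s ∈ S) (h : s < t) : s ≤ tsRho S t := by
  unfold tsRho
  rw [if_pos ⟨s, hs, h⟩]
  exact le_csSup ⟨t, fun x hx => hx.2.le⟩ ⟨hs, h⟩

lemma sig_mem {S : Set ℝ} (hS : IsClosed S) {t : ℝ} (ht : t ∈ S) : tsSigma S t ∈ S := by
  unfold tsSigma
  split_ifs with h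
  · have h1 := csInf_mem_closure h ⟨t, fun x hx => hx.2.le⟩
    have : closure {s | s ∈ S ∧ t < s} ⊆ S := closure_minimal (fun x hx => hx.1) hS
    exact this h1
  · exact ht

lemma rho_mem {S : Set ℝ} (hS : IsClosed S) {t : ℝ} (ht : t ∈ S) : tsRho S t ∈ S := by
  unfold tsRho
  split_ifs with h
  · have h1 := csSup_mem_closure h ⟨t, fun x hx => hx.2.le⟩
    have : closure {s | s ∈ S ∧ s < t} ⊆ S := closure_minimal (fun x hx => hx.1) hS
    exact this h1
  · exact ht

lemma sig_approx {S : Set ℝ} {t u x : ℝ} (h : tsSigma S t = t) (hu : u ∈ S) (htu : t < u)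
    (hx : t < x) : ∃ s ∈ S, t < s ∧ s < x := by
  by_contra! hc
  unfold tsSigma at h
  rw [if_pos ⟨u, hu, htu⟩] at h
  have : x ≤ sInf {s | s ∈ S ∧ t < s} := le_csInf ⟨u, hu, htu⟩ fun s hs => hc s hs.1 hs.2
  linarith

lemma rho_approx {S : Set ℝ} {t u x : ℝ} (h : tsRho S t = t) (hu : u ∈ S) (htu : u < t)
    (hx : x < t) : ∃ s ∈ S, x < s ∧ s < t := by
  by_contra! hc
  unfold tsRho at h
  rw [if_pos ⟨u, hu, htu⟩] at h
  have : sSup {s | s ∈ S ∧ s < t} ≤ x := csSup_le ⟨u, hu, htu⟩ fun s hs => by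
    by_contra! h2
    exact absurd hs.2 (not_lt.mpr (hc s hs.1 h2))
  linarith

lemma right_bot {S : Set ℝ} {t : ℝ} (h : tsSigma S t ≠ t) : nhdsWithin t (S ∩ Ioi t) = ⊥ := by
  have h1 : t < tsSigma S t := lt_of_le_of_ne (sig_ge S t) (Ne.symm h)
  rw [← Filter.empty_mem_iff_bot]
  have : Iio (tsSigma S t) ∈ nhdsWithin t (S ∩ Ioi t) := mem_nhdsWithin_of_mem_nhds (Iio_mem_nhds h1)
  filter_upwards [this, self_mem_nhdsWithin] with x hx hx2
  exact absurd (sig_le hx2.1 hx2.2) (not_le.mpr hx)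

lemma left_bot {S : Set ℝ} {t : ℝ} (h : tsRho S t ≠ t) : nhdsWithin t (S ∩ Iio t) = ⊥ := by
  have h1 : tsRho S t < t := lt_of_le_of_ne (rho_le S t) h
  rw [← Filter.empty_mem_iff_bot]
  have : Ioi (tsRho S t) ∈ nhdsWithin t (S ∩ Iio t) := mem_nhdsWithin_of_mem_nhds (Ioi_mem_nhds h1)
  filter_upwards [this, self_mem_nhdsWithin] with x hx hx2
  exact absurd (le_rho hx2.1 hx2.2) (not_le.mpr hx)

lemma nhds_split (S : Set ℝ) (t : ℝ) :
    nhdsWithin t S ≤ nhdsWithin t (S ∩ Iio t) ⊔ (pure t ⊔ nhdsWithin t (S ∩ Ioi t)) := by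
  rw [← nhdsWithin_singleton, ← nhdsWithin_union, ← nhdsWithin_union]
  apply nhdsWithin_mono
  intro x hx
  rcases lt_trichotomy x t with h | h | h
  · exact Or.inl ⟨hx, h⟩
  · exact Or.inr (Or.inl h)
  · exact Or.inr (Or.inr ⟨hx, h⟩)

lemma rd_bdd {E : Type*} [NormedAddCommGroup E] {S : Set ℝ} (hS : IsCompact S) {f : ℝ → E}
    (hf : RdContinuousOn S f) : ∃ B, ∀ t ∈ S, ‖f t‖ ≤ B := by
  have key : ∃ B, ∀ t ∈ S ∩ S, ‖f t‖ ≤ B := by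
    refine hS.induction_on (p := fun s => ∃ B, ∀ t ∈ s ∩ S, ‖f t‖ ≤ B) ⟨0, by simp⟩ ?_ ?_ ?_
    · rintro s t hst ⟨B, hB⟩
      exact ⟨B, fun x hx => hB x ⟨hst hx.1, hx.2⟩⟩
    · rintro s t ⟨B, hB⟩ ⟨B', hB'⟩
      refine ⟨max B B', ?_⟩
      rintro x ⟨hx | hx, hxS⟩
      · exact (hB x ⟨hx, hxS⟩).trans (le_max_left _ _)
      · exact (hB' x ⟨hx, hxS⟩).trans (le_max_right _ _)
    · intro x hx
      suffices h : ∃ B, ∀ᶠ t in nhdsWithin x S, ‖f t‖ ≤ B by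
        obtain ⟨B, hB⟩ := h
        exact ⟨_, hB, B, fun t ht => ht.1⟩
      by_cases h1 : tsSigma S x = x
      · have := ((hf x hx).1 h1).norm
        refine ⟨‖f x‖ + 1, ?_⟩
        have := this.eventually (gt_mem_nhds (lt_add_one ‖f x‖))
        filter_upwards [this] with t ht using ht.le
      · have hl : ∃ B, ∀ᶠ t in nhdsWithin x (S ∩ Iio x), ‖f t‖ ≤ B := by
          by_cases h2 : tsRho S x = x
          · obtain ⟨l, hl⟩ := (hf x hx).2 h2
            refine ⟨‖l‖ + 1, ?_⟩
            have := hl.norm.eventually (gt_mem_nhds (lt_add_one ‖l‖))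
            filter_upwards [this] with t ht using ht.le
          · rw [left_bot h2]
            exact ⟨0, by simp⟩
        obtain ⟨B, hB⟩ := hl
        refine ⟨max B ‖f x‖, (nhds_split S x) ?_⟩
        rw [right_bot h1]
        simp only [sup_bot_eq, mem_sup, mem_pure]
        refine ⟨?_, by simp⟩
        filter_upwards [hB] with t ht using ht.trans (le_max_left _ _)
  simpa using key

lemma sig_tendsto_left {S : Set ℝ} (t : ℝ) :
    Tendsto (tsSigma S) (nhdsWithin t (S ∩ Iio t)) (nhds t) ∨ t ∉ S := by
  by_cases ht : t ∈ S
  · left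
    refine tendsto_of_tendsto_of_tendsto_of_le_of_le' (g := id) (h := fun _ => t) ?_ tendsto_const_nhds ?_ ?_
    · exact tendsto_id.mono_left nhdsWithin_le_nhds
    · exact Eventually.of_forall fun x => sig_ge S x
    · filter_upwards [self_mem_nhdsWithin] with x hx using sig_le ht hx.2
  · exact Or.inr ht

namespace TSc
variable (h : TSc T a b)
include h

lemma sSup_eq : sSup T = b := h.great.csSup_eq

lemma rho_memT : tsRho T b ∈ T := rho_mem h.cpt.isClosed h.great.1

lemma mem_Tk {t : ℝ} : t ∈ tsTk T ↔ t ∈ T ∧ t ≤ tsRho T b := by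
  unfold tsTk
  rw [h.sSup_eq]
  constructor
  · rintro ⟨h1, h2⟩
    refine ⟨h1, ?_⟩
    by_contra! h3
    exact h2 ⟨h3, h.great.2 h1⟩
  · rintro ⟨h1, h2⟩
    exact ⟨h1, fun h3 => absurd h3.1 (not_lt.mpr h2)⟩

lemma Tk_eq : tsTk T = T ∩ Iic (tsRho T b) := by
  ext t; exact h.mem_Tk

lemma a_le_rho : a ≤ tsRho T b := le_rho h.least.1 h.lt

lemma rho_mem_Tk : tsRho T b ∈ tsTk T := h.mem_Tk.2 ⟨h.rho_memT, le_rfl⟩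

lemma a_mem_Tk : a ∈ tsTk T := h.mem_Tk.2 ⟨h.least.1, h.a_le_rho⟩

lemma Tk_cpt : IsCompact (tsTk T) := by
  rw [h.Tk_eq]; exact h.cpt.inter_right isClosed_Iic

lemma sigT {t : ℝ} (ht : t ∈ T) : tsSigma T t ∈ T := sig_mem h.cpt.isClosed ht

lemma sig_b : tsSigma T b = b := le_antisymm (h.great.2 (h.sigT h.great.1)) (sig_ge _ _)

lemma sig_rho : tsSigma T (tsRho T b) = b := by
  rcases eq_or_lt_of_le (rho_le T b) with h1 | h1
  · rw [h1, h.sig_b]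
  · apply le_antisymm (sig_le h.great.1 h1)
    unfold tsSigma
    rw [if_pos ⟨b, h.great.1, h1⟩]
    refine le_csInf ⟨b, h.great.1, h1⟩ ?_
    rintro s ⟨hs, hs2⟩
    by_contra! h3
    exact absurd (le_rho hs h3) (not_le.mpr hs2)

lemma rd_Tk {t : ℝ} (_ht : t ∈ tsTk T) (hs : tsSigma T t = t) : tsSigma (tsTk T) t = t := by
  apply le_antisymm _ (sig_ge _ _)
  by_cases hne : ∃ u ∈ tsTk T, t < u
  · obtain ⟨u, hu, htu⟩ := hne
    refine le_of_forall_pos_le_add fun ε hε => ?_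
    obtain ⟨s, hsT, h1, h2⟩ := sig_approx hs (h.mem_Tk.1 hu).1 htu
      (lt_min htu (by linarith : t < t + ε))
    have : s ∈ tsTk T := h.mem_Tk.2 ⟨hsT, by
      have := (h.mem_Tk.1 hu).2; have := lt_min_iff.1 h2; linarith⟩
    exact (sig_le this h1).trans (lt_min_iff.1 h2).2.le
  · unfold tsSigma
    rw [if_neg]
    rintro ⟨u, hu⟩
    exact hne ⟨u, hu.1, hu.2⟩

lemma sig_tendsto {t : ℝ} (_ht : t ∈ T) (hs : tsSigma T t = t) :
    Tendsto (tsSigma T) (nhdsWithin t T) (nhds t) := by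
  rw [tendsto_order]
  constructor
  · intro x hx
    have : Ioi x ∈ nhdsWithin t T := mem_nhdsWithin_of_mem_nhds (Ioi_mem_nhds hx)
    filter_upwards [this] with s hs using lt_of_lt_of_le hs (sig_ge _ _)
  · intro x hx
    by_cases htb : t < b
    · obtain ⟨s, hsT, h1, h2⟩ := sig_approx hs h.great.1 htb hx
      have : Iio s ∈ nhdsWithin t T := mem_nhdsWithin_of_mem_nhds (Iio_mem_nhds h1)
      filter_upwards [this] with u hu using lt_of_le_of_lt (sig_le hsT hu) h2
    · filter_upwards [self_mem_nhdsWithin] with u hu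
      have := h.great.2 (h.sigT hu)
      linarith

lemma sig_le_rho {t : ℝ} (ht : t < tsRho T b) : tsSigma T t ≤ tsRho T b :=
  sig_le h.rho_memT ht

/-- delta differentiable implies continuous -/
lemma cont_of_diff {E : Type*} [NormedAddCommGroup E] [NormedSpace ℝ E] {y yd : ℝ → E}
    (hy : ∀ t ∈ tsTk T, deltaDiffAt T y t (yd t)) : ContinuousOn y T := by
  intro t ht
  by_cases htk : t ∈ tsTk T
  · have hd := hy t htk
    have e1 : ∀ ε > 0, ∀ᶠ s in nhdsWithin t T,
        ‖y (tsSigma T t) - y s - (tsSigma T t - s) • yd t‖ ≤ ε * |tsSigma T t - s| := by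
      intro ε hε
      obtain ⟨δ, hδ, H⟩ := hd ε hε
      have : Ioo (t - δ) (t + δ) ∈ nhdsWithin t T :=
        mem_nhdsWithin_of_mem_nhds (Ioo_mem_nhds (by linarith) (by linarith))
      filter_upwards [this, self_mem_nhdsWithin] with s h1 h2 using H s ⟨h2, h1⟩
    -- the remainder tends to zero
    have e2 : Tendsto (fun s => y (tsSigma T t) - y s - (tsSigma T t - s) • yd t)
        (nhdsWithin t T) (nhds 0) := by
      rw [tendsto_zero_iff_norm_tendsto_zero, Metric.tendsto_nhds]
      intro ε hε
      set m := |tsSigma T t - t| + 1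
      have hm : 0 < m := by positivity
      have hc : ∀ᶠ s in nhdsWithin t T, |tsSigma T t - s| < m := by
        have : Tendsto (fun s => |tsSigma T t - s|) (nhdsWithin t T) (nhds |tsSigma T t - t|) :=
          (Continuous.tendsto (by fun_prop) t).mono_left nhdsWithin_le_nhds
        exact this.eventually (gt_mem_nhds (lt_add_one _))
      filter_upwards [hc, e1 (ε / m) (by positivity)] with s h1 h2
      simp only [dist_zero_right, norm_norm]
      calc _ ≤ _ := h2
        _ < ε / m * m := by gcongr
        _ = ε := by field_simp
    have e3 : y (tsSigma T t) - y t - (tsSigma T t - t) • yd t = 0 :=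
      tendsto_nhds_unique (tendsto_pure_nhds _ _ |>.mono_right le_rfl)
        (e2.mono_left (pure_le_nhdsWithin ht))
    have e4 : Tendsto (fun s => y (tsSigma T t) - (tsSigma T t - s) • yd t -
        (y (tsSigma T t) - y s - (tsSigma T t - s) • yd t)) (nhdsWithin t T)
        (nhds (y (tsSigma T t) - (tsSigma T t - t) • yd t - 0)) := by
      refine Tendsto.sub ?_ e2
      exact (Continuous.tendsto (by fun_prop) t).mono_left nhdsWithin_le_nhds
    have e5 : y (tsSigma T t) - (tsSigma T t - t) • yd t - 0 = y t := by
      have := sub_eq_zero.1 e3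
      rw [← this]; abel
    rw [e5] at e4
    refine e4.congr fun s => by abel
  · have : t = b := by
      by_contra hne
      exact htk (h.mem_Tk.2 ⟨ht, le_rho ht (lt_of_le_of_ne (h.great.2 ht) hne)⟩)
    subst this
    have hr : tsRho T t < t := by
      by_contra! h3
      exact htk (h.mem_Tk.2 ⟨ht, h3⟩)
    have hrt : nhdsWithin t (T ∩ Ioi t) = ⊥ := by
      have : T ∩ Ioi t = ∅ := by
        ext x
        simp only [mem_inter_iff, mem_Ioi, mem_empty_iff_false, iff_false, not_and, not_lt]
        exact fun hx => h.great.2 hx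
      rw [this, nhdsWithin_empty]
    have : nhdsWithin t T ≤ pure t := by
      refine (nhds_split T t).trans ?_
      rw [left_bot hr.ne, hrt]
      simp
    exact (tendsto_pure_nhds y t).mono_left this

end TSc
end sig


def tsPi (T : Set ℝ) (a u : ℝ) : ℝ := sSup (tsTk T ∩ Iic (max u a))

section anti
open MeasureTheory
variable {T : Set ℝ} {a b : ℝ}
namespace TSc
variable (h : TSc T a b)
include h

lemma pi_ne (u : ℝ) : (tsTk T ∩ Iic (max u a)).Nonempty := ⟨a, h.a_mem_Tk, by simp⟩

lemma pi_bdd (u : ℝ) : BddAbove (tsTk T ∩ Iic (max u a)) := ⟨max u a, fun _ hx => hx.2⟩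

lemma pi_mem' (u : ℝ) : tsPi T a u ∈ tsTk T ∩ Iic (max u a) :=
  (h.Tk_cpt.isClosed.inter isClosed_Iic).csSup_mem (h.pi_ne u) (h.pi_bdd u)

lemma pi_mem (u : ℝ) : tsPi T a u ∈ tsTk T := (h.pi_mem' u).1

lemma pi_le {u : ℝ} (hu : a ≤ u) : tsPi T a u ≤ u := by
  have := (h.pi_mem' u).2
  rwa [max_eq_left hu] at this

lemma le_pi {u s : ℝ} (hs : s ∈ tsTk T) (hsu : s ≤ u) : s ≤ tsPi T a u :=
  le_csSup (h.pi_bdd u) ⟨hs, hsu.trans (le_max_left _ _)⟩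

lemma pi_mono : Monotone (tsPi T a) := by
  intro u v huv
  exact csSup_le_csSup (h.pi_bdd v) (h.pi_ne u)
    (inter_subset_inter_right _ (Iic_subset_Iic.2 (max_le_max huv le_rfl)))

lemma a_le {t : ℝ} (ht : t ∈ T) : a ≤ t := h.least.2 ht

lemma pi_eq {t u : ℝ} (ht : t ∈ tsTk T) (h1 : t ≤ u) (h2 : u < tsSigma T t) : tsPi T a u = t := by
  apply le_antisymm _ (h.le_pi ht h1)
  by_contra! h3
  have := sig_le (h.mem_Tk.1 (h.pi_mem u)).1 h3
  have := h.pi_le ((h.a_le (h.mem_Tk.1 ht).1).trans h1)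
  linarith

lemma meas_comp {f : ℝ → ℝ}
    (hc : ∀ t ∈ tsTk T, tsSigma T t = t → ContinuousWithinAt f (tsTk T) t) :
    Measurable (fun u => f (tsPi T a u)) := by
  classical
  set K := tsTk T
  have hK : MeasurableSet K := h.Tk_cpt.isClosed.measurableSet
  set C : Set ℝ := {x ∈ T | nhdsWithin x (T ∩ Ioi x) = ⊥} with hC
  have hCc : C.Countable := countable_setOfPred_isolated_right_within
  have hm : Measurable (K.indicator f) := by
    have hco : ContinuousOn f (K \ C) := by
      intro x hx
      refine (hc x hx.1 ?_).mono sdiff_subset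
      by_contra h3
      exact hx.2 ⟨(h.mem_Tk.1 hx.1).1, right_bot h3⟩
    have hms : MeasurableSet (K \ C) := hK.diff hCc.measurableSet
    have h1 : Measurable ((K \ C).indicator f) := by
      rw [← Set.piecewise_eq_indicator]
      exact hco.measurable_piecewise continuousOn_const hms
    refine h1.measurable_of_countable_ne (hCc.mono ?_)
    intro x hx
    by_contra h2
    apply hx
    by_cases h1 : x ∈ K <;> simp [h1, h2]
  have e2 : (fun u => f (tsPi T a u)) = K.indicator f ∘ tsPi T a := by
    funext u
    simp [K, h.pi_mem u]
  rw [e2]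
  exact hm.comp h.pi_mono.measurable

lemma int_comp {f : ℝ → ℝ} {B : ℝ} (hB : ∀ t ∈ tsTk T, |f t| ≤ B)
    (hc : ∀ t ∈ tsTk T, tsSigma T t = t → ContinuousWithinAt f (tsTk T) t) (x y : ℝ) :
    IntervalIntegrable (fun u => f (tsPi T a u)) volume x y := by
  rw [intervalIntegrable_iff]
  refine Measure.integrableOn_of_bounded (M := B) ?_ (h.meas_comp hc).aestronglyMeasurable ?_
  · simp [uIoc]
  · exact Eventually.of_forall fun u => hB _ (h.pi_mem u)

lemma anti {f : ℝ → ℝ} {B : ℝ} (hB : ∀ t ∈ tsTk T, |f t| ≤ B)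
    (hc : ∀ t ∈ tsTk T, tsSigma T t = t → ContinuousWithinAt f (tsTk T) t) :
    IsDeltaAntideriv T f (fun t => ∫ u in a..t, f (tsPi T a u)) := by
  have hi := h.int_comp hB hc
  intro t ht ε hε
  have hB0 : 0 ≤ B := (abs_nonneg _).trans (hB t ht)
  have hdiff : ∀ s, (∫ u in a..(tsSigma T t), f (tsPi T a u)) - (∫ u in a..s, f (tsPi T a u))
      - (tsSigma T t - s) • f t = ∫ u in s..(tsSigma T t), (f (tsPi T a u) - f t) := by
    intro s
    rw [intervalIntegral.integral_sub (hi _ _) intervalIntegrable_const,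
      intervalIntegral.integral_interval_sub_left (hi _ _) (hi _ _),
      intervalIntegral.integral_const]
  simp only [hdiff]
  by_cases hs : tsSigma T t = t
  · have hcont := hc t ht hs
    rw [Metric.continuousWithinAt_iff] at hcont
    obtain ⟨δ, hδ, H⟩ := hcont ε hε
    refine ⟨δ, hδ, ?_⟩
    rintro s ⟨hsT, hs1, hs2⟩
    rw [hs]
    refine intervalIntegral.norm_integral_le_of_norm_le_const ?_
    intro u hu
    refine (H (h.pi_mem u) ?_).le
    rw [Real.dist_eq, abs_lt]
    rcases le_total s t with hst | hst
    · rw [uIoc_of_le hst] at hu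
      have hsK : s ∈ tsTk T := h.mem_Tk.2 ⟨hsT, hst.trans (h.mem_Tk.1 ht).2⟩
      have := h.le_pi hsK hu.1.le
      have := h.pi_le ((h.a_le hsT).trans hu.1.le)
      constructor <;> linarith [hu.2]
    · rw [uIoc_of_ge hst] at hu
      have := h.le_pi ht hu.1.le
      have := h.pi_le ((h.a_le (h.mem_Tk.1 ht).1).trans hu.1.le)
      constructor <;> linarith [hu.2]
  · have hlt : t < tsSigma T t := lt_of_le_of_ne (sig_ge _ _) (Ne.symm hs)
    set m := tsSigma T t - t with hm
    have hm0 : 0 < m := by linarith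
    refine ⟨min m (ε * m / (2 * B + 1)), lt_min hm0 (by positivity), ?_⟩
    rintro s ⟨hsT, hs1, hs2⟩
    have hst : s ≤ t := by
      by_contra! hh
      have := sig_le hsT hh
      have := min_le_left m (ε * m / (2 * B + 1))
      linarith
    have hii : ∀ x y, IntervalIntegrable (fun u => f (tsPi T a u) - f t) volume x y :=
      fun x y => (hi x y).sub intervalIntegrable_const
    rw [← intervalIntegral.integral_add_adjacent_intervals (hii s t) (hii t _)]
    have z : ∫ u in t..(tsSigma T t), (f (tsPi T a u) - f t) = 0 := by
      rw [intervalIntegral.integral_congr_Ioo_of_le (g := fun _ => 0) hlt.le]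
      · simp
      · intro u hu
        simp [h.pi_eq ht hu.1.le hu.2]
    rw [z, add_zero]
    have b1 : ‖∫ u in s..t, (f (tsPi T a u) - f t)‖ ≤ (2 * B) * |t - s| := by
      refine intervalIntegral.norm_integral_le_of_norm_le_const fun u _ => ?_
      have h1 := hB _ (h.pi_mem u)
      have h2 := hB _ ht
      rw [Real.norm_eq_abs]
      have := abs_sub (f (tsPi T a u)) (f t)
      linarith
    rw [abs_of_nonneg (by linarith : 0 ≤ t - s)] at b1
    rw [abs_of_nonneg (by linarith : 0 ≤ tsSigma T t - s)]
    have b2 : t - s ≤ ε * m / (2 * B + 1) := by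
      have := min_le_right m (ε * m / (2 * B + 1))
      linarith
    have b3 : (2 * B + 1) * (t - s) ≤ ε * m := by
      rw [le_div_iff₀ (by positivity)] at b2
      linarith
    have : ε * m ≤ ε * (tsSigma T t - s) := by
      gcongr
      linarith
    linarith

end TSc
end anti


def rampQ (c r t : ℝ) : ℝ := min 1 (max 0 ((t - c) / (r - c)))
def rampA (c r x y : ℝ) : ℝ := ∫ h in (0:ℝ)..1, rampQ c r (x + (y - x) * h)
def rampP (c r y : ℝ) : ℝ := ∫ u in c..y, rampQ c r u

section ramp
open MeasureTheory
variable {c r : ℝ}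

lemma rampQ_cont : Continuous (rampQ c r) := by
  unfold rampQ
  fun_prop

lemma rampQ_nonneg (t : ℝ) : 0 ≤ rampQ c r t := le_min zero_le_one (le_max_left _ _)

lemma rampQ_le (t : ℝ) : rampQ c r t ≤ 1 := min_le_left _ _

lemma rampQ_zero (hcr : c < r) {t : ℝ} (ht : t ≤ c) : rampQ c r t = 0 := by
  unfold rampQ
  have : (t - c) / (r - c) ≤ 0 := div_nonpos_of_nonpos_of_nonneg (by linarith) (by linarith)
  rw [max_eq_left this]
  simp

lemma rampQ_one (hcr : c < r) {t : ℝ} (ht : r ≤ t) : rampQ c r t = 1 := by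
  unfold rampQ
  have : 1 ≤ (t - c) / (r - c) := by rw [le_div_iff₀ (by linarith)]; linarith
  rw [max_eq_right (by linarith), min_eq_left this]

lemma rampQ_mid (hcr : c < r) {t : ℝ} (ht : c ≤ t) (ht2 : t ≤ r) :
    rampQ c r t = (t - c) / (r - c) := by
  unfold rampQ
  have : (t - c) / (r - c) ≤ 1 := by rw [div_le_one (by linarith)]; linarith
  have h2 : 0 ≤ (t - c) / (r - c) := div_nonneg (by linarith) (by linarith)
  rw [max_eq_right h2, min_eq_right this]

lemma rampQ_mono (hcr : c < r) : Monotone (rampQ c r) := by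
  intro x y hxy
  unfold rampQ
  have : 0 ≤ r - c := by linarith
  gcongr

lemma rampQ_int (x y : ℝ) : IntervalIntegrable (rampQ c r) volume x y :=
  rampQ_cont.intervalIntegrable _ _

lemma rampA_int (x y : ℝ) :
    IntervalIntegrable (fun h => rampQ c r (x + (y - x) * h)) volume 0 1 :=
  (rampQ_cont.comp (by fun_prop)).intervalIntegrable _ _

lemma rampA_cont : Continuous (fun p : ℝ × ℝ => rampA c r p.1 p.2) := by
  unfold rampA
  refine intervalIntegral.continuous_parametric_intervalIntegral_of_continuous' ?_ 0 1
  exact rampQ_cont.comp (by fun_prop)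

lemma rampA_mul (x y : ℝ) : (y - x) * rampA c r x y = rampP c r y - rampP c r x := by
  unfold rampA rampP
  rw [intervalIntegral.mul_integral_comp_add_mul,
    intervalIntegral.integral_interval_sub_left (rampQ_int _ _) (rampQ_int _ _)]
  simp

lemma rampA_le (x y : ℝ) : rampA c r x y ≤ 1 := by
  have := intervalIntegral.integral_mono_on (zero_le_one' ℝ) (rampA_int (c := c) (r := r) x y)
    (intervalIntegrable_const (c := (1:ℝ))) (fun h _ => rampQ_le _)
  simpa [rampA] using this

lemma rampA_ge {x y m : ℝ} (hm : ∀ h ∈ Icc (0:ℝ) 1, m ≤ rampQ c r (x + (y - x) * h)) :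
    m ≤ rampA c r x y := by
  have := intervalIntegral.integral_mono_on (zero_le_one' ℝ)
    (intervalIntegrable_const (c := m)) (rampA_int (c := c) (r := r) x y) hm
  simpa [rampA] using this

lemma rampA_nonneg (x y : ℝ) : 0 ≤ rampA c r x y := rampA_ge fun _ _ => rampQ_nonneg _

lemma rampA_geQ (hcr : c < r) {x y : ℝ} (hxy : x ≤ y) : rampQ c r x ≤ rampA c r x y := by
  refine rampA_ge fun h hh => rampQ_mono hcr ?_
  nlinarith [hh.1]

lemma rampA_self (x : ℝ) : rampA c r x x = rampQ c r x := by
  simp [rampA]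

lemma rampA_one (hcr : c < r) {x y : ℝ} (hx : r ≤ x) (hxy : x ≤ y) : rampA c r x y = 1 := by
  apply le_antisymm (rampA_le _ _)
  rw [← rampQ_one hcr hx]
  exact rampA_geQ hcr hxy

lemma rampA_zero (hcr : c < r) {x y : ℝ} (hxy : x ≤ y) (hy : y ≤ c) : rampA c r x y = 0 := by
  unfold rampA
  rw [intervalIntegral.integral_congr (g := fun _ => 0)]
  · simp
  · intro h hh
    rw [uIcc_of_le zero_le_one] at hh
    refine rampQ_zero hcr ?_
    nlinarith [hh.1, hh.2]

lemma rampP_zero (hcr : c < r) {y : ℝ} (hy : y ≤ c) : rampP c r y = 0 := by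
  have h1 := rampA_mul (c := c) (r := r) y c
  rw [rampA_zero hcr hy le_rfl] at h1
  have : rampP c r c = 0 := by simp [rampP]
  linarith

lemma rampP_mono {x y : ℝ} (hxy : x ≤ y) : rampP c r x ≤ rampP c r y := by
  have h1 := rampA_mul (c := c) (r := r) x y
  have := mul_nonneg (sub_nonneg.2 hxy) (rampA_nonneg (c := c) (r := r) x y)
  linarith

lemma rampP_nonneg (hcr : c < r) (y : ℝ) : 0 ≤ rampP c r y := by
  rcases le_total y c with h | h
  · exact (rampP_zero hcr h).ge
  · rw [← rampP_zero hcr le_rfl]; exact rampP_mono h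

lemma rampP_le (hcr : c < r) {y : ℝ} (hy : y ≤ r) : rampP c r y ≤ r - c := by
  refine (rampP_mono hy).trans ?_
  have h1 := rampA_mul (c := c) (r := r) c r
  have h2 := rampP_zero hcr le_rfl
  have := mul_le_mul_of_nonneg_left (rampA_le (c := c) (r := r) c r) (sub_nonneg.2 hcr.le)
  linarith

lemma rampP_right (hcr : c < r) {y : ℝ} (hy : r ≤ y) : rampP c r y = rampP c r r + (y - r) := by
  have h1 := rampA_mul (c := c) (r := r) r y
  rw [rampA_one hcr le_rfl hy] at h1
  linarith

lemma rampP_le_A (hcr : c < r) {x y : ℝ} (hx : c ≤ x) (hxy : x ≤ y) (hy : y ≤ r) :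
    rampP c r y ≤ 2 * (r - c) * rampA c r x y := by
  have e1 : rampP c r y ≤ (y - c) * rampQ c r y := by
    have := intervalIntegral.integral_mono_on (hx.trans hxy) (rampQ_int (c := c) (r := r) c y)
      (intervalIntegrable_const (c := rampQ c r y)) (fun h hh => rampQ_mono hcr hh.2)
    simpa [rampP] using this
  have e2 : rampQ c r y / 2 ≤ rampA c r x y := by
    have := intervalIntegral.integral_mono_on (zero_le_one' ℝ)
      (f := fun h => h * rampQ c r y) (Continuous.intervalIntegrable (by fun_prop) _ _)
      (rampA_int (c := c) (r := r) x y) (fun h hh => by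
        rw [rampQ_mid hcr (hx.trans hxy) hy, rampQ_mid hcr (by nlinarith [hh.1])
          (by nlinarith [hh.1, hh.2]), ← mul_div_assoc]
        have : 0 ≤ r - c := by linarith
        gcongr
        nlinarith [hh.1, hh.2])
    rw [intervalIntegral.integral_mul_const, integral_id] at this
    unfold rampA
    linarith
  have e3 : (y - c) * rampQ c r y ≤ (r - c) * rampQ c r y :=
    mul_le_mul_of_nonneg_right (by linarith) (rampQ_nonneg _)
  nlinarith

lemma ramp_C1 {T : Set ℝ} {a b : ℝ} (h : TSc T a b) (hcr : c < tsRho T b) :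
    C1rd T (rampP c (tsRho T b)) (fun t => rampA c (tsRho T b) t (tsSigma T t)) := by
  set r := tsRho T b with hr
  have hAt : ∀ (l : Filter ℝ) (t : ℝ), Tendsto id l (nhds t) → Tendsto (tsSigma T) l (nhds t) →
      Tendsto (fun t => rampA c r t (tsSigma T t)) l (nhds (rampQ c r t)) := by
    intro l t h1 h2
    have k : Tendsto (fun p : ℝ × ℝ => rampA c r p.1 p.2) (nhds (t, t)) (nhds (rampA c r t t)) :=
      (rampA_cont (c := c) (r := r)).tendsto (t, t)
    have k2 : Tendsto (fun s : ℝ => (s, tsSigma T s)) l (nhds (t, t)) := h1.prodMk_nhds h2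
    have k3 := k.comp k2
    rw [rampA_self] at k3
    exact k3
  have hleft : ∀ t ∈ tsTk T, Tendsto (fun t => rampA c r t (tsSigma T t))
      (nhdsWithin t (tsTk T ∩ Iio t)) (nhds (rampQ c r t)) := by
    intro t ht
    have htT := (h.mem_Tk.1 ht).1
    refine hAt _ t (tendsto_id.mono_left nhdsWithin_le_nhds) ?_
    rcases sig_tendsto_left (S := T) t with h1 | h1
    · refine h1.mono_left (nhdsWithin_mono _ ?_)
      exact inter_subset_inter_left _ (fun x hx => (h.mem_Tk.1 hx).1)
    · exact absurd htT h1
  constructor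
  · intro t ht ε hε
    have hc : Tendsto (fun s => rampA c r s (tsSigma T t)) (nhds t)
        (nhds (rampA c r t (tsSigma T t))) := by
      have k : Continuous fun s : ℝ => (s, tsSigma T t) := by fun_prop
      have k2 := (rampA_cont (c := c) (r := r)).comp k
      exact k2.tendsto t
    rw [Metric.tendsto_nhds_nhds] at hc
    obtain ⟨δ, hδ, H⟩ := hc ε hε
    refine ⟨δ, hδ, ?_⟩
    rintro s ⟨-, hs1, hs2⟩
    have := H (x := s) (by rw [Real.dist_eq, abs_lt]; constructor <;> linarith)
    rw [← rampA_mul, smul_eq_mul, ← mul_sub, norm_mul, mul_comm, Real.norm_eq_abs, Real.norm_eq_abs]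
    rw [Real.dist_eq] at this
    gcongr
  · intro t ht
    refine ⟨fun hs => ?_, fun _ => ⟨_, hleft t ht⟩⟩
    have htT := (h.mem_Tk.1 ht).1
    by_cases hs2 : tsSigma T t = t
    · have := hAt (nhdsWithin t (tsTk T)) t (tendsto_id.mono_left nhdsWithin_le_nhds)
        ((h.sig_tendsto htT hs2).mono_left (nhdsWithin_mono _ fun x hx => (h.mem_Tk.1 hx).1))
      show Tendsto _ _ (nhds (rampA c r t (tsSigma T t)))
      rw [hs2, rampA_self]
      exact this
    · have htr : t = r := by
        by_contra hne
        have hlt : t < r := lt_of_le_of_ne (h.mem_Tk.1 ht).2 hne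
        obtain ⟨s, hsK, h1, h2⟩ := sig_approx hs h.rho_mem_Tk hlt
          (lt_of_le_of_ne (sig_ge _ _) (Ne.symm hs2))
        exact absurd (sig_le (h.mem_Tk.1 hsK).1 h1) (not_le.mpr h2)
      show Tendsto _ _ (nhds (rampA c r t (tsSigma T t)))
      have hone : rampA c r t (tsSigma T t) = 1 := rampA_one hcr htr.ge (sig_ge _ _)
      have hbot : nhdsWithin t (tsTk T ∩ Ioi t) = ⊥ := by
        have : tsTk T ∩ Ioi t = ∅ := by
          ext x
          simp only [mem_inter_iff, mem_Ioi, mem_empty_iff_false, iff_false, not_and, not_lt]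
          intro hx
          rw [htr]
          exact (h.mem_Tk.1 hx).2
        rw [this, nhdsWithin_empty]
      refine Tendsto.mono_left ?_ (nhds_split _ _)
      rw [hbot, sup_bot_eq]
      refine Tendsto.sup ?_ (tendsto_pure_nhds _ _)
      have := hleft t ht
      rwa [rampQ_one hcr htr.ge, ← hone] at this

lemma C1_comb {E : Type*} [NormedAddCommGroup E] [NormedSpace ℝ E] {T : Set ℝ} {y yd : ℝ → E}
    {p pd : ℝ → ℝ} (hy : C1rd T y yd) (hp : C1rd T p pd) (w : E) :
    C1rd T (fun t => y t + p t • w) (fun t => yd t + pd t • w) := by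
  constructor
  · intro t ht ε hε
    obtain ⟨δ1, hδ1, H1⟩ := hy.1 t ht (ε / 2) (by positivity)
    obtain ⟨δ2, hδ2, H2⟩ := hp.1 t ht (ε / 2 / (‖w‖ + 1)) (by positivity)
    refine ⟨min δ1 δ2, lt_min hδ1 hδ2, ?_⟩
    rintro s ⟨hsT, hs1, hs2⟩
    have m1 := min_le_left δ1 δ2
    have m2 := min_le_right δ1 δ2
    have k1 := H1 s ⟨hsT, by linarith, by linarith⟩
    have k2 := H2 s ⟨hsT, by linarith, by linarith⟩
    set σ := tsSigma T t
    have e : y σ + p σ • w - (y s + p s • w) - (σ - s) • (yd t + pd t • w)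
        = (y σ - y s - (σ - s) • yd t) + (p σ - p s - (σ - s) • pd t) • w := by
      simp only [smul_eq_mul]
      module
    rw [e]
    refine (norm_add_le _ _).trans ?_
    rw [norm_smul]
    have : ‖p σ - p s - (σ - s) • pd t‖ * ‖w‖ ≤ ε / 2 * |σ - s| := by
      calc _ ≤ (ε / 2 / (‖w‖ + 1) * |σ - s|) * (‖w‖ + 1) := by
            gcongr
            linarith
        _ = _ := by field_simp
    linarith
  · intro t ht
    refine ⟨fun hs => ?_, fun hs => ?_⟩
    · exact ((hy.2 t ht).1 hs).add (((hp.2 t ht).1 hs).smul continuousWithinAt_const)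
    · obtain ⟨l1, h1⟩ := (hy.2 t ht).2 hs
      obtain ⟨l2, h2⟩ := (hp.2 t ht).2 hs
      exact ⟨_, h1.add (h2.smul_const w)⟩
end ramp


structure Lag {n : ℕ} (T : Set ℝ) (L : ℝ → En n → En n → ℝ) (Ly Lv : ℝ → En n → En n → En n) :
    Prop where
  c : ContinuousOn (fun p : ℝ × En n × En n => L p.1 p.2.1 p.2.2)
      (T ×ˢ (univ : Set (En n × En n)))
  c2 : ∀ t ∈ T, ContDiff ℝ 2 (fun p : En n × En n => L t p.1 p.2)
  gy : ∀ t ∈ T, ∀ y v : En n, HasGradientAt (fun z => L t z v) (Ly t y v) y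
  gv : ∀ t ∈ T, ∀ y v : En n, HasGradientAt (fun z => L t y z) (Lv t y v) v
  cy : ContinuousOn (fun p : ℝ × En n × En n => Ly p.1 p.2.1 p.2.2)
      (T ×ˢ (univ : Set (En n × En n)))
  cv : ContinuousOn (fun p : ℝ × En n × En n => Lv p.1 p.2.1 p.2.2)
      (T ×ˢ (univ : Set (En n × En n)))

section lag
open MeasureTheory
variable {n : ℕ} {T : Set ℝ} {a b : ℝ} {L : ℝ → En n → En n → ℝ} {Ly Lv : ℝ → En n → En n → En n}

lemma cont_bdd {E : Type*} [NormedAddCommGroup E] (hT : IsCompact T)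
    {g : ℝ → En n → En n → E}
    (hg : ContinuousOn (fun p : ℝ × En n × En n => g p.1 p.2.1 p.2.2)
      (T ×ˢ (univ : Set (En n × En n)))) (R : ℝ) :
    ∃ M, 0 ≤ M ∧ ∀ t ∈ T, ∀ y v : En n, ‖y‖ ≤ R → ‖v‖ ≤ R → ‖g t y v‖ ≤ M := by
  have hK : IsCompact (T ×ˢ (Metric.closedBall (0 : En n) R ×ˢ Metric.closedBall (0 : En n) R)) :=
    hT.prod ((isCompact_closedBall _ _).prod (isCompact_closedBall _ _))
  obtain ⟨M, hM⟩ := hK.exists_bound_of_continuousOn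
    (hg.mono (prod_mono le_rfl (subset_univ _)))
  refine ⟨max M 0, le_max_right _ _, fun t ht y v hy hv => ?_⟩
  refine (hM (t, y, v) ⟨ht, ?_, ?_⟩).trans (le_max_left _ _)
  · simpa using hy
  · simpa using hv

lemma C1_bdd (h : TSc T a b) {y yd : ℝ → En n} (hy : C1rd T y yd) :
    ∃ R, 0 ≤ R ∧ (∀ t ∈ T, ‖y t‖ ≤ R) ∧ ∀ t ∈ tsTk T, ‖yd t‖ ≤ R := by
  obtain ⟨B1, h1⟩ := rd_bdd h.Tk_cpt hy.2
  obtain ⟨B2, h2⟩ := h.cpt.exists_bound_of_continuousOn (h.cont_of_diff hy.1)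
  refine ⟨max 0 (max B1 B2), le_max_left _ _, fun t ht => (h2 t ht).trans ?_,
    fun t ht => (h1 t ht).trans ?_⟩ <;> simp

lemma ysig_tendsto (h : TSc T a b) {y yd : ℝ → En n} (hy : C1rd T y yd) {t : ℝ} (ht : t ∈ T)
    (hs : tsSigma T t = t) : Tendsto (fun s => y (tsSigma T s)) (nhdsWithin t T) (nhds (y t)) := by
  have h1 := h.cont_of_diff hy.1 t ht
  refine Tendsto.comp h1 ?_
  refine tendsto_nhdsWithin_iff.2 ⟨h.sig_tendsto ht hs, ?_⟩
  filter_upwards [self_mem_nhdsWithin] with s hs using h.sigT hs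

lemma lag_rd (h : TSc T a b) (hL : Lag T L Ly Lv) {y yd : ℝ → En n} (hy : C1rd T y yd) :
    (∃ B, ∀ t ∈ tsTk T, |L t (y (tsSigma T t)) (yd t)| ≤ B) ∧
    ∀ t ∈ tsTk T, tsSigma T t = t →
      ContinuousWithinAt (fun t => L t (y (tsSigma T t)) (yd t)) (tsTk T) t := by
  have hsub : tsTk T ⊆ T := fun x hx => (h.mem_Tk.1 hx).1
  constructor
  · obtain ⟨R, -, h1, h2⟩ := C1_bdd h hy
    obtain ⟨M, -, hM⟩ := cont_bdd h.cpt hL.c R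
    exact ⟨M, fun t ht => hM t (hsub ht) _ _ (h1 _ (h.sigT (hsub ht))) (h2 t ht)⟩
  · intro t ht hs
    have h1 := (ysig_tendsto h hy (hsub ht) hs).mono_left (nhdsWithin_mono t hsub)
    have h2 : Tendsto yd (nhdsWithin t (tsTk T)) (nhds (yd t)) := (hy.2 t ht).1 (h.rd_Tk ht hs)
    have h3 : Tendsto (fun p : ℝ × En n × En n => L p.1 p.2.1 p.2.2)
        (nhdsWithin (t, y t, yd t) (T ×ˢ (univ : Set (En n × En n)))) (nhds (L t (y t) (yd t))) :=
      hL.c (t, y t, yd t) ⟨hsub ht, mem_univ _⟩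
    have h0 : Tendsto (fun s : ℝ => s) (nhdsWithin t (tsTk T)) (nhds t) :=
      tendsto_id.mono_left nhdsWithin_le_nhds
    have h4 : Tendsto (fun s => (s, y (tsSigma T s), yd s)) (nhdsWithin t (tsTk T))
        (nhdsWithin (t, y t, yd t) (T ×ˢ (univ : Set (En n × En n)))) := by
      refine tendsto_nhdsWithin_iff.2 ⟨h0.prodMk_nhds (h1.prodMk_nhds h2), ?_⟩
      filter_upwards [self_mem_nhdsWithin] with s hs using ⟨hsub hs, mem_univ _⟩
    have h5 := h3.comp h4
    show Tendsto _ _ (nhds (L t (y (tsSigma T t)) (yd t)))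
    rw [hs]
    exact h5

lemma mvt (hL : Lag T L Ly Lv) {t : ℝ} (ht : t ∈ T) (y v p q : En n) :
    ∃ s ∈ Ioo (0:ℝ) 1, L t (y + p) (v + q) - L t y v
      = inner ℝ (Ly t (y + s • p) (v + s • q)) p + inner ℝ (Lv t (y + s • p) (v + s • q)) q := by
  have hd : ∀ s : ℝ, HasDerivAt (fun s : ℝ => L t (y + s • p) (v + s • q))
      (inner ℝ (Ly t (y + s • p) (v + s • q)) p + inner ℝ (Lv t (y + s • p) (v + s • q)) q) s := by
    intro s
    set Y := y + s • p with hY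
    set V := v + s • q with hV
    have hf : HasFDerivAt (fun z : En n × En n => L t z.1 z.2)
        (fderiv ℝ (fun z : En n × En n => L t z.1 z.2) (Y, V)) (Y, V) :=
      (((hL.c2 t ht).differentiable (by norm_num)) (Y, V)).hasFDerivAt
    set D := fderiv ℝ (fun z : En n × En n => L t z.1 z.2) (Y, V)
    have h1 : HasFDerivAt (fun z : En n => (z, V)) (ContinuousLinearMap.inl ℝ (En n) (En n)) Y :=
      hasFDerivAt_prodMk_left Y V
    have h2 : HasFDerivAt (fun z : En n => (Y, z)) (ContinuousLinearMap.inr ℝ (En n) (En n)) V :=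
      hasFDerivAt_prodMk_right Y V
    have c1 : HasFDerivAt (fun z : En n => L t z V)
        (D.comp (ContinuousLinearMap.inl ℝ (En n) (En n))) Y :=
      HasFDerivAt.comp (f := fun z : En n => (z, V)) Y hf h1
    have c2 : HasFDerivAt (fun z : En n => L t Y z)
        (D.comp (ContinuousLinearMap.inr ℝ (En n) (En n))) V :=
      HasFDerivAt.comp (f := fun z : En n => (Y, z)) V hf h2
    have e1 := c1.unique (hL.gy t ht Y V).hasFDerivAt
    have e2 := c2.unique (hL.gv t ht Y V).hasFDerivAt
    have e1' : D (p, 0) = inner ℝ (Ly t Y V) p := by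
      have := congrArg (fun A => A p) e1
      simpa using this
    have e2' : D (0, q) = inner ℝ (Lv t Y V) q := by
      have := congrArg (fun A => A q) e2
      simpa using this
    have hc : HasDerivAt (fun s : ℝ => (y + s • p, v + s • q)) (p, q) s := by
      refine HasDerivAt.prodMk ?_ ?_
      · simpa using ((hasDerivAt_id s).smul_const p).const_add y
      · simpa using ((hasDerivAt_id s).smul_const q).const_add v
    have := HasFDerivAt.comp_hasDerivAt s (f := fun s : ℝ => (y + s • p, v + s • q)) hf hc
    have e3 : D (p, q) = inner ℝ (Ly t Y V) p + inner ℝ (Lv t Y V) q := by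
      rw [← e1', ← e2', ← map_add]
      simp
    rw [← e3]
    exact this
  obtain ⟨s, hs, e⟩ := exists_hasDerivAt_eq_slope (fun s : ℝ => L t (y + s • p) (v + s • q)) _
    (zero_lt_one' ℝ) (fun s _ => (hd s).continuousAt.continuousWithinAt) (fun s _ => hd s)
  refine ⟨s, hs, ?_⟩
  rw [e]
  simp

/-- integrand difference -/
def lagD {n : ℕ} (T : Set ℝ) (b : ℝ) (L : ℝ → En n → En n → ℝ) (ys yds : ℝ → En n) (w : En n) (c ε t : ℝ) : ℝ :=
  L t (ys (tsSigma T t) + rampP c (tsRho T b) (tsSigma T t) • (ε • w))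
      (yds t + rampA c (tsRho T b) t (tsSigma T t) • (ε • w))
    - L t (ys (tsSigma T t)) (yds t)

def isMin {n : ℕ} (T : Set ℝ) (a b : ℝ) (L : ℝ → En n → En n → ℝ) (ys yds : ℝ → En n) (δ : ℝ) : Prop :=
  ∀ y yd : ℝ → En n, C1rd T y yd →
      y a = ys a →
      tsSupNorm (tsTk T) (fun t => y t - ys t)
        + tsSupNorm (tsTk T) (fun t => yd t - yds t) < δ →
      ∀ F G : ℝ → ℝ,
        IsDeltaAntideriv T (fun t => L t (ys (tsSigma T t)) (yds t)) F →
        IsDeltaAntideriv T (fun t => L t (y (tsSigma T t)) (yd t)) G →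
        F b - F a ≤ G b - G a

lemma key (h : TSc T a b) (hL : Lag T L Ly Lv) {ys yds : ℝ → En n} (hy : C1rd T ys yds)
    {δ : ℝ} (hmin : isMin T a b L ys yds δ) {c ε : ℝ} (hac : a ≤ c) (hcr : c < tsRho T b)
    (hc1 : tsRho T b - c ≤ 1) (w : En n) (hε : 0 < ε) (hε2 : ε * (2 * ‖w‖) < δ) :
    (∀ x y, IntervalIntegrable (fun u => lagD T b L ys yds w c ε (tsPi T a u)) volume x y) ∧
    0 ≤ ∫ u in a..b, lagD T b L ys yds w c ε (tsPi T a u) := by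
  have hy2 := C1_comb hy (ramp_C1 h hcr) (ε • w)
  obtain ⟨⟨B1, hB1⟩, hc1'⟩ := lag_rd h hL hy
  obtain ⟨⟨B2, hB2⟩, hc2⟩ := lag_rd h hL hy2
  have i1 := h.int_comp hB1 hc1'
  have i2 := h.int_comp hB2 hc2
  have hw : 0 ≤ ε * ‖w‖ := by positivity
  have hm := hmin _ _ hy2 (by simp [rampP_zero hcr hac]) (by
    have k1 : tsSupNorm (tsTk T) (fun t => ys t + rampP c (tsRho T b) t • (ε • w) - ys t) ≤ ε * ‖w‖ := by
      refine Real.sSup_le ?_ hw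
      rintro _ ⟨t, ht, rfl⟩
      simp only [add_sub_cancel_left, norm_smul, Real.norm_eq_abs]
      rw [abs_of_nonneg (rampP_nonneg hcr t), abs_of_pos hε]
      have := rampP_le hcr (h.mem_Tk.1 ht).2
      nlinarith
    have k2 : tsSupNorm (tsTk T) (fun t => yds t + rampA c (tsRho T b) t (tsSigma T t) • (ε • w) - yds t) ≤ ε * ‖w‖ := by
      refine Real.sSup_le ?_ hw
      rintro _ ⟨t, ht, rfl⟩
      simp only [add_sub_cancel_left, norm_smul, Real.norm_eq_abs]
      rw [abs_of_nonneg (rampA_nonneg _ _), abs_of_pos hε]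
      have := rampA_le (c := c) (r := tsRho T b) t (tsSigma T t)
      nlinarith
    linarith) _ _ (h.anti hB1 hc1') (h.anti hB2 hc2)
  refine ⟨fun x y => (i2 x y).sub (i1 x y), ?_⟩
  unfold lagD
  rw [intervalIntegral.integral_sub (i2 a b) (i1 a b)]
  simp only [intervalIntegral.integral_same, sub_zero] at hm
  linarith

lemma Dform (hL : Lag T L Ly Lv) (ys yds : ℝ → En n) (w : En n) (c ε : ℝ) {t : ℝ} (ht : t ∈ T) :
    ∃ s ∈ Ioo (0:ℝ) 1, lagD T b L ys yds w c ε t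
      = ε * (rampP c (tsRho T b) (tsSigma T t) *
          inner ℝ (Ly t (ys (tsSigma T t) + (s * ε * rampP c (tsRho T b) (tsSigma T t)) • w)
            (yds t + (s * ε * rampA c (tsRho T b) t (tsSigma T t)) • w)) w
        + rampA c (tsRho T b) t (tsSigma T t) *
          inner ℝ (Lv t (ys (tsSigma T t) + (s * ε * rampP c (tsRho T b) (tsSigma T t)) • w)
            (yds t + (s * ε * rampA c (tsRho T b) t (tsSigma T t)) • w)) w) := by
  obtain ⟨s, hs, e⟩ := mvt hL ht (ys (tsSigma T t)) (yds t)
    (rampP c (tsRho T b) (tsSigma T t) • (ε • w)) (rampA c (tsRho T b) t (tsSigma T t) • (ε • w))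
  refine ⟨s, hs, ?_⟩
  unfold lagD
  rw [e]
  simp only [smul_smul, inner_smul_right]
  have e1 : ∀ x : ℝ, s * (x * ε) = s * ε * x := fun x => by ring
  simp only [e1]
  ring

lemma exists_eps {η Z : ℝ} (hη : 0 < η) (hZ : 0 ≤ Z) : ∃ ε : ℝ, 0 < ε ∧ ε ≤ 1 ∧ ε * Z < η := by
  refine ⟨min 1 (η / (Z + 1)), by positivity, min_le_left _ _, ?_⟩
  calc min 1 (η / (Z + 1)) * Z ≤ η / (Z + 1) * Z := by gcongr; exact min_le_right _ _
    _ < η / (Z + 1) * (Z + 1) := by gcongr; linarith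
    _ = η := by field_simp

lemma inner_bd {M : ℝ} {x w : En n} (hx : ‖x‖ ≤ M) : inner ℝ x w ≤ M * ‖w‖ :=
  (real_inner_le_norm x w).trans (by gcongr)

end lag


section final
open MeasureTheory
variable {n : ℕ} {T : Set ℝ} {a b : ℝ} {L : ℝ → En n → En n → ℝ} {Ly Lv : ℝ → En n → En n → En n}

lemma exists_M (h : TSc T a b) (hL : Lag T L Ly Lv) {ys yds : ℝ → En n} (hy : C1rd T ys yds)
    (w : En n) : ∃ M, 0 ≤ M ∧ ∀ t ∈ tsTk T, ∀ x y : ℝ, |x| ≤ 1 + (b - a) → |y| ≤ 1 →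
      ‖Ly t (ys (tsSigma T t) + x • w) (yds t + y • w)‖ ≤ M ∧
      ‖Lv t (ys (tsSigma T t) + x • w) (yds t + y • w)‖ ≤ M := by
  obtain ⟨R, hR, h1, h2⟩ := C1_bdd h hy
  have hab := h.lt
  obtain ⟨M1, hM1, k1⟩ := cont_bdd h.cpt hL.cy (R + (1 + (b - a)) * ‖w‖)
  obtain ⟨M2, hM2, k2⟩ := cont_bdd h.cpt hL.cv (R + (1 + (b - a)) * ‖w‖)
  refine ⟨max M1 M2, le_max_of_le_left hM1, fun t ht x y hx hy => ?_⟩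
  have htT := (h.mem_Tk.1 ht).1
  have b1 : ‖ys (tsSigma T t) + x • w‖ ≤ R + (1 + (b - a)) * ‖w‖ := by
    refine (norm_add_le _ _).trans (add_le_add (h1 _ (h.sigT htT)) ?_)
    rw [norm_smul]
    exact mul_le_mul_of_nonneg_right hx (norm_nonneg _)
  have b2 : ‖yds t + y • w‖ ≤ R + (1 + (b - a)) * ‖w‖ := by
    refine (norm_add_le _ _).trans (add_le_add (h2 _ ht) ?_)
    rw [norm_smul, Real.norm_eq_abs]
    exact mul_le_mul_of_nonneg_right (by linarith) (norm_nonneg _)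
  exact ⟨(k1 t htT _ _ b1 b2).trans (le_max_left _ _), (k2 t htT _ _ b1 b2).trans (le_max_right _ _)⟩

lemma exists_c (h : TSc T a b) (har : a < tsRho T b) {θ : ℝ} (hθ : 0 < θ) (hθ1 : θ ≤ 1) :
    ∃ c c', a ≤ c ∧ c < tsRho T b ∧ tsRho T b - c ≤ θ ∧ c' ∈ T ∧ c' ≤ tsRho T b ∧
      tsRho T b - c' ≤ θ ∧ ∀ t ∈ T, t < c' → rampA c (tsRho T b) t (tsSigma T t) ≤ θ := by
  set r := tsRho T b
  by_cases hl : tsRho T r = r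
  · obtain ⟨s, hs, h1, h2⟩ := rho_approx hl h.least.1 har (max_lt har (by linarith : r - θ < r))
    have h3 := max_lt_iff.1 h1
    refine ⟨s, s, h3.1.le, h2, by linarith, hs, h2.le, by linarith, fun t _ hts => ?_⟩
    rw [rampA_zero h2 (sig_ge _ _) (sig_le hs hts)]
    exact hθ.le
  · have hlt : tsRho T r < r := lt_of_le_of_ne (rho_le _ _) hl
    set q := tsRho T r with hq
    have haq : a ≤ q := le_rho h.least.1 har
    have hd : 0 < r - q := by linarith
    have hcr : r - min θ (θ * (r - q)) < r := by
      have : 0 < min θ (θ * (r - q)) := by positivity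
      linarith
    have hm1 := min_le_left θ (θ * (r - q))
    have hm2 := min_le_right θ (θ * (r - q))
    have hqc : q ≤ r - min θ (θ * (r - q)) := by nlinarith
    refine ⟨r - min θ (θ * (r - q)), r, by linarith, hcr, by linarith, h.rho_memT, le_rfl,
      by linarith, fun t ht htr => ?_⟩
    have htq : t ≤ q := le_rho ht htr
    have hsr : tsSigma T t ≤ r := sig_le h.rho_memT htr
    rcases le_or_gt (tsSigma T t) q with h1 | h1
    · rw [rampA_zero hcr (sig_ge _ _) (h1.trans hqc)]
      exact hθ.le
    · have hsig : tsSigma T t = r := by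
        by_contra hne
        exact absurd (le_rho (h.sigT ht) (lt_of_le_of_ne hsr hne)) (not_le.mpr h1)
      rw [hsig]
      have e1 := rampA_mul (c := r - min θ (θ * (r - q))) (r := r) t r
      rw [rampP_zero hcr (htq.trans hqc)] at e1
      have e2 := rampP_le hcr (le_refl r)
      have e3 := rampA_nonneg (c := r - min θ (θ * (r - q))) (r := r) t r
      set A := rampA (r - min θ (θ * (r - q))) r t r
      have e4 : (r - q) * A ≤ (r - t) * A := mul_le_mul_of_nonneg_right (by linarith) e3
      have e5 : (r - q) * A ≤ (r - q) * θ := by linarith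
      exact le_of_mul_le_mul_left e5 hd

lemma int_bd {f : ℝ → ℝ} {x y C : ℝ} (hxy : x ≤ y) (hf : IntervalIntegrable f volume x y)
    (hC : ∀ u ∈ Ioo x y, f u ≤ C) : ∫ u in x..y, f u ≤ (y - x) * C := by
  have := intervalIntegral.integral_mono_on_of_le_Ioo hxy hf
    (intervalIntegrable_const (c := C)) hC
  simpa using this

/-- common bounds for the ramp at sigma -/
lemma ramp_bds (h : TSc T a b) {c ε s t : ℝ} (hcr : c < tsRho T b)
    (hc1 : tsRho T b - c ≤ 1) (hε : 0 < ε) (hε1 : ε ≤ 1) (hs : s ∈ Ioo (0:ℝ) 1) (ht : t ∈ T) :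
    |s * ε * rampP c (tsRho T b) (tsSigma T t)| ≤ ε * (1 + (b - a)) ∧
    |s * ε * rampP c (tsRho T b) (tsSigma T t)| ≤ 1 + (b - a) ∧
    |s * ε * rampA c (tsRho T b) t (tsSigma T t)| ≤ ε ∧
    |s * ε * rampA c (tsRho T b) t (tsSigma T t)| ≤ 1 := by
  have hab := h.lt
  have p0 := rampP_nonneg hcr (tsSigma T t)
  have p1 : rampP c (tsRho T b) (tsSigma T t) ≤ 1 + (b - a) := by
    refine (rampP_mono (h.great.2 (h.sigT ht))).trans ?_
    rw [rampP_right hcr (rho_le T b)]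
    have := rampP_le hcr (le_refl (tsRho T b))
    have := h.a_le_rho
    linarith
  have q0 := rampA_nonneg (c := c) (r := tsRho T b) t (tsSigma T t)
  have q1 := rampA_le (c := c) (r := tsRho T b) t (tsSigma T t)
  set P := rampP c (tsRho T b) (tsSigma T t)
  set A := rampA c (tsRho T b) t (tsSigma T t)
  have hs0 := hs.1
  have hse : s * ε ≤ ε := by nlinarith [hs.2]
  have hse0 : 0 ≤ s * ε := by positivity
  rw [abs_of_nonneg (by positivity), abs_of_nonneg (by positivity)]
  have k1 : s * ε * P ≤ ε * (1 + (b - a)) := mul_le_mul hse p1 p0 hε.le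
  have k2 : s * ε * A ≤ ε * 1 := mul_le_mul hse q1 q0 hε.le
  refine ⟨k1, ?_, by linarith, by linarith⟩
  nlinarith

set_option maxHeartbeats 1000000 in
lemma case1 (h : TSc T a b) (hL : Lag T L Ly Lv) {ys yds : ℝ → En n} (hy : C1rd T ys yds)
    {δ : ℝ} (hδ : 0 < δ) (hmin : isMin T a b L ys yds δ) (har : a < tsRho T b)
    (hrb : tsRho T b < b) :
    (b - tsRho T b) • Ly (tsRho T b) (ys b) (yds (tsRho T b))
      + Lv (tsRho T b) (ys b) (yds (tsRho T b)) = 0 := by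
  by_contra hne
  set r := tsRho T b with hr
  have hrT : r ∈ T := h.rho_memT
  have hrK : r ∈ tsTk T := h.rho_mem_Tk
  have hsr : tsSigma T r = b := h.sig_rho
  set μ := b - r with hμ
  have hμ0 : 0 < μ := by linarith
  set g := μ • Ly r (ys b) (yds r) + Lv r (ys b) (yds r) with hg
  set w := -g with hw
  have hw0 : 0 < ‖w‖ := by rw [hw, norm_neg]; exact norm_pos_iff.2 hne
  set κ := ‖w‖ ^ 2 / 2 with hκ
  have hκ0 : 0 < κ := by positivity
  -- continuity
  have hcont : Continuous (fun z : En n × En n =>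
      inner ℝ (μ • Ly r z.1 z.2 + Lv r z.1 z.2) w) := by
    have c0 : ∀ z : En n × En n, ((r, z) : ℝ × En n × En n) ∈ T ×ˢ (univ : Set (En n × En n)) :=
      fun z => ⟨hrT, mem_univ _⟩
    have c1 : Continuous (fun z : En n × En n => Ly r z.1 z.2) :=
      hL.cy.comp_continuous (f := fun z : En n × En n => (r, z)) (by fun_prop) c0
    have c2 : Continuous (fun z : En n × En n => Lv r z.1 z.2) :=
      hL.cv.comp_continuous (f := fun z : En n × En n => (r, z)) (by fun_prop) c0
    fun_prop
  have hval : inner ℝ (μ • Ly r (ys b) (yds r) + Lv r (ys b) (yds r)) w < -κ := by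
    rw [← hg, show g = -w by simp [hw], inner_neg_left, real_inner_self_eq_norm_sq]
    have : 0 < ‖w‖ ^ 2 := by positivity
    linarith
  have hev := (hcont.tendsto (ys b, yds r)).eventually (gt_mem_nhds hval)
  rw [Metric.eventually_nhds_iff] at hev
  obtain ⟨δ1, hδ1, H⟩ := hev
  obtain ⟨M, hM0, hM⟩ := exists_M h hL hy w
  have hab := h.lt
  set M' := M * ‖w‖ with hM'
  have hM'0 : 0 ≤ M' := by positivity
  obtain ⟨θ, hθ, hθ1, hθ2⟩ := exists_eps (η := κ * μ) (Z := M' * (2 * (b - a) + 2 + μ))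
    (by positivity) (mul_nonneg hM'0 (by linarith))
  obtain ⟨c, c', hac, hcr, hcθ, hc'T, hc'r, hc'θ, hA⟩ := exists_c h har hθ hθ1
  obtain ⟨ε, hε, hε1, hε2⟩ := exists_eps (η := min δ δ1) (Z := (2 + (b - a)) * ‖w‖)
    (lt_min hδ hδ1) (mul_nonneg (by linarith) hw0.le)
  have hε3 := hε2.trans_le (min_le_left _ _)
  have hε4 := hε2.trans_le (min_le_right _ _)
  have hba : 0 < (b - a) * ‖w‖ := mul_pos (by linarith) hw0
  have hεw : 0 < ε * ‖w‖ := mul_pos hε hw0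
  have hεba : 0 < ε * ((b - a) * ‖w‖) := mul_pos hε hba
  have hε5 : ε * (1 + (b - a)) * ‖w‖ < δ1 := by linarith only [hε4, hεw, hεba]
  have hε6 : ε * ‖w‖ < δ1 := by linarith only [hε4, hεw, hεba]
  have hε7 : ε * (2 * ‖w‖) < δ := by linarith only [hε3, hεw, hεba]
  have hc1 : r - c ≤ 1 := by linarith
  obtain ⟨hi, hk⟩ := key h hL hy hmin hac hcr hc1 w hε (by linarith only [hε7])
  have hac' : a ≤ c' := h.a_le hc'T
  -- D bound for t < r
  have hD : ∀ t ∈ tsTk T, t < r →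
      lagD T b L ys yds w c ε t ≤ ε * (θ * M' + rampA c r t (tsSigma T t) * M') := by
    intro t ht htr
    have htT := (h.mem_Tk.1 ht).1
    obtain ⟨s, hs, e⟩ := Dform (b := b) hL ys yds w c ε htT
    obtain ⟨r1, r2, r3, r4⟩ := ramp_bds h hcr hc1 hε hε1 hs htT
    obtain ⟨m1, m2⟩ := hM t ht _ _ r2 r4
    rw [e]
    have i1 := inner_bd (w := w) m1
    have i2 := inner_bd (w := w) m2
    have p0 := rampP_nonneg hcr (tsSigma T t)
    have p1 := (rampP_le hcr (h.sig_le_rho htr)).trans hcθ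
    have q0 := rampA_nonneg (c := c) (r := r) t (tsSigma T t)
    refine mul_le_mul_of_nonneg_left (add_le_add ?_ ?_) hε.le
    · exact (mul_le_mul_of_nonneg_left i1 p0).trans (mul_le_mul_of_nonneg_right p1 hM'0)
    · exact mul_le_mul_of_nonneg_left i2 q0
  have hDr : lagD T b L ys yds w c ε r ≤ ε * (-κ + θ * M') := by
    obtain ⟨s, hs, e⟩ := Dform (b := b) hL ys yds w c ε hrT
    obtain ⟨r1, r2, r3, r4⟩ := ramp_bds h hcr hc1 hε hε1 hs hrT
    obtain ⟨m1, m2⟩ := hM r hrK _ _ r2 r4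
    rw [e]
    have i1 := inner_bd (w := w) m1
    have a1 : rampA c (tsRho T b) r (tsSigma T r) = 1 := rampA_one hcr le_rfl (sig_ge _ _)
    have pb : rampP c (tsRho T b) (tsSigma T r) = rampP c r r + μ := by
      rw [hsr]; exact rampP_right hcr hrb.le
    have p0 := rampP_nonneg hcr r
    have p1 := (rampP_le hcr (le_refl r)).trans hcθ
    set x := s * ε * rampP c (tsRho T b) (tsSigma T r)
    set y := s * ε * rampA c (tsRho T b) r (tsSigma T r)
    rw [pb, a1]
    rw [hsr] at i1 ⊢
    have H2 := H (y := (ys b + x • w, yds r + y • w)) (by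
      rw [Prod.dist_eq, max_lt_iff]
      simp only [dist_self_add_left, norm_smul, Real.norm_eq_abs]
      constructor
      · have := mul_le_mul_of_nonneg_right r1 hw0.le
        linarith only [this, hε5]
      · have := mul_le_mul_of_nonneg_right r3 hw0.le
        linarith only [this, hε6])
    simp only [inner_add_left, inner_smul_left, conj_trivial] at H2
    set I1 := inner ℝ (Ly r (ys b + x • w) (yds r + y • w)) w
    set I2 := inner ℝ (Lv r (ys b + x • w) (yds r + y • w)) w
    refine mul_le_mul_of_nonneg_left ?_ hε.le
    have k1 : rampP c r r * I1 ≤ θ * M' :=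
      (mul_le_mul_of_nonneg_left i1 p0).trans (mul_le_mul_of_nonneg_right p1 hM'0)
    linarith
  rw [← intervalIntegral.integral_add_adjacent_intervals (hi a r) (hi r b),
    ← intervalIntegral.integral_add_adjacent_intervals (hi a c') (hi c' r)] at hk
  have j1 := int_bd hac' (hi a c') (C := ε * (2 * θ * M')) (fun u hu => by
    have h1 := h.pi_le hu.1.le
    have h2 : tsPi T a u < c' := by linarith [hu.2]
    have h3 := hD _ (h.pi_mem u) (by linarith)
    have h4 := hA _ (h.mem_Tk.1 (h.pi_mem u)).1 h2
    have h5 := mul_le_mul_of_nonneg_right h4 hM'0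
    refine h3.trans (mul_le_mul_of_nonneg_left ?_ hε.le)
    linarith)
  have j2 := int_bd hc'r (hi c' r) (C := ε * (2 * M')) (fun u hu => by
    have h1 := h.pi_le (hac'.trans hu.1.le)
    have h3 := hD _ (h.pi_mem u) (by linarith [hu.2])
    have h4 := rampA_le (c := c) (r := r) (tsPi T a u) (tsSigma T (tsPi T a u))
    have h5 := mul_le_mul_of_nonneg_right h4 hM'0
    have h6 := mul_le_mul_of_nonneg_right hθ1 hM'0
    refine h3.trans (mul_le_mul_of_nonneg_left ?_ hε.le)
    linarith)
  have j3 := int_bd hrb.le (hi r b) (C := ε * (-κ + θ * M')) (fun u hu => by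
    rw [h.pi_eq hrK hu.1.le (by rw [hsr]; exact hu.2)]
    exact hDr)
  have l1 : (c' - a) * (ε * (2 * θ * M')) ≤ ε * ((b - a) * (2 * θ * M')) := by
    have : (c' - a) * (2 * θ * M') ≤ (b - a) * (2 * θ * M') :=
      mul_le_mul_of_nonneg_right (by linarith) (by positivity)
    have := mul_le_mul_of_nonneg_left this hε.le
    linarith only [this]
  have l2 : (r - c') * (ε * (2 * M')) ≤ ε * (θ * (2 * M')) := by
    have : (r - c') * (2 * M') ≤ θ * (2 * M') :=
      mul_le_mul_of_nonneg_right hc'θ (by positivity)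
    have := mul_le_mul_of_nonneg_left this hε.le
    linarith only [this]
  have l3 : 0 ≤ ε * ((b - a) * (2 * θ * M') + θ * (2 * M') + μ * (-κ + θ * M')) := by
    have e : (b - r) * (ε * (-κ + θ * M')) = ε * (μ * (-κ + θ * M')) := by rw [hμ]; ring
    rw [e] at j3
    linarith
  have l4 := nonneg_of_mul_nonneg_right l3 hε
  linarith only [l4, hθ2]

set_option maxHeartbeats 1000000 in
lemma case2 (h : TSc T a b) (hL : Lag T L Ly Lv) {ys yds : ℝ → En n} (hy : C1rd T ys yds)
    {δ : ℝ} (hδ : 0 < δ) (hmin : isMin T a b L ys yds δ)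
    (hrb : tsRho T b = b) : Lv b (ys b) (yds b) = 0 := by
  by_contra hne
  have hab := h.lt
  have hbT : b ∈ T := h.great.1
  have hbK : b ∈ tsTk T := h.mem_Tk.2 ⟨hbT, hrb.ge⟩
  have hsub : tsTk T ⊆ T := fun x hx => (h.mem_Tk.1 hx).1
  set g := Lv b (ys b) (yds b) with hg
  set w := -g with hw
  have hw0 : 0 < ‖w‖ := by rw [hw, norm_neg]; exact norm_pos_iff.2 hne
  set κ := ‖w‖ ^ 2 / 2 with hκ
  have hκ0 : 0 < κ := by positivity
  have hval : inner ℝ (Lv b (ys b) (yds b)) w < -κ := by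
    rw [← hg, show g = -w by simp [hw], inner_neg_left, real_inner_self_eq_norm_sq]
    have : 0 < ‖w‖ ^ 2 := by positivity
    linarith
  have hc0 : Tendsto (fun p : ℝ × En n × En n => Lv p.1 p.2.1 p.2.2)
      (nhdsWithin (b, ys b, yds b) (T ×ˢ (univ : Set (En n × En n))))
      (nhds (Lv b (ys b) (yds b))) := hL.cv (b, ys b, yds b) ⟨hbT, mem_univ _⟩
  have hev := (hc0.inner (tendsto_const_nhds (x := w))).eventually (gt_mem_nhds hval)
  obtain ⟨δ1, hδ1, H⟩ := Metric.mem_nhdsWithin_iff.1 hev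
  have hd2 : ∀ᶠ t in nhdsWithin b (tsTk T), dist (ys (tsSigma T t)) (ys b) < δ1 / 2 ∧
      dist (yds t) (yds b) < δ1 / 2 ∧ dist t b < δ1 := by
    have t1 := (ysig_tendsto h hy hbT h.sig_b).mono_left (nhdsWithin_mono b hsub)
    have t2 : Tendsto yds (nhdsWithin b (tsTk T)) (nhds (yds b)) :=
      (hy.2 b hbK).1 (h.rd_Tk hbK h.sig_b)
    have t3 : Tendsto (fun s : ℝ => s) (nhdsWithin b (tsTk T)) (nhds b) :=
      tendsto_id.mono_left nhdsWithin_le_nhds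
    have hh : 0 < δ1 / 2 := by positivity
    exact (Metric.tendsto_nhds.1 t1 _ hh).and
      ((Metric.tendsto_nhds.1 t2 _ hh).and (Metric.tendsto_nhds.1 t3 _ hδ1))
  obtain ⟨δ2, hδ2, H2⟩ := Metric.mem_nhdsWithin_iff.1 hd2
  obtain ⟨M, hM0, hM⟩ := exists_M h hL hy w
  set M' := M * ‖w‖ with hM'
  have hM'0 : 0 ≤ M' := by positivity
  obtain ⟨θ, hθ, hθ1, hθ2⟩ := exists_eps (η := min δ2 (κ / 2)) (Z := 1 + 2 * M')
    (lt_min hδ2 (by positivity)) (by positivity)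
  have hθ3 := hθ2.trans_le (min_le_left _ _)
  have hθ4 := hθ2.trans_le (min_le_right _ _)
  have hθM : 0 ≤ θ * M' := by positivity
  obtain ⟨c, hcT, hc1, hc2⟩ := rho_approx hrb h.least.1 hab (max_lt hab (by linarith : b - θ < b))
  obtain ⟨hc3, hc4⟩ := max_lt_iff.1 hc1
  obtain ⟨d, hdT, hd1, hdb⟩ := rho_approx hrb h.least.1 hab hc2
  have hcr : c < tsRho T b := by rw [hrb]; exact hc2
  obtain ⟨ε, hε, hε1, hε2⟩ := exists_eps (η := min δ (δ1 / 2)) (Z := (2 + (b - a)) * ‖w‖)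
    (lt_min hδ (by positivity)) (mul_nonneg (by linarith) hw0.le)
  have hε3 := hε2.trans_le (min_le_left _ _)
  have hε4 := hε2.trans_le (min_le_right _ _)
  have hba : 0 < (b - a) * ‖w‖ := mul_pos (by linarith) hw0
  have hεw : 0 < ε * ‖w‖ := mul_pos hε hw0
  have hεba : 0 < ε * ((b - a) * ‖w‖) := mul_pos hε hba
  have hε5 : ε * (1 + (b - a)) * ‖w‖ < δ1 / 2 := by linarith only [hε4, hεw, hεba]
  have hε6 : ε * ‖w‖ < δ1 / 2 := by linarith only [hε4, hεw, hεba]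
  have hε7 : ε * (2 * ‖w‖) < δ := by linarith only [hε3, hεw, hεba]
  have hcle : tsRho T b - c ≤ 1 := by rw [hrb]; linarith
  obtain ⟨hi, hk⟩ := key h hL hy hmin hc3.le hcr hcle w hε (by linarith only [hε7])
  have hD : ∀ t ∈ tsTk T, c ≤ t → lagD T b L ys yds w c ε t
      ≤ -(ε * (rampA c (tsRho T b) t (tsSigma T t) * (κ / 2))) := by
    intro t ht hct
    have htT := hsub ht
    have htb : t ≤ b := h.great.2 htT
    obtain ⟨s, hs, e⟩ := Dform (b := b) hL ys yds w c ε htT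
    obtain ⟨r1, r2, r3, r4⟩ := ramp_bds h hcr hcle hε hε1 hs htT
    obtain ⟨m1, m2⟩ := hM t ht _ _ r2 r4
    rw [e]
    have i1 := inner_bd (w := w) m1
    have p0 := rampP_nonneg hcr (tsSigma T t)
    have p1 := rampP_le_A hcr hct (sig_ge T t) (by rw [hrb]; exact h.great.2 (h.sigT htT))
    have q0 := rampA_nonneg (c := c) (r := tsRho T b) t (tsSigma T t)
    obtain ⟨n1, n2, n3⟩ := H2 ⟨by
      rw [Metric.mem_ball, Real.dist_eq, abs_lt]; constructor <;> linarith, ht⟩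
    set x := s * ε * rampP c (tsRho T b) (tsSigma T t)
    set y := s * ε * rampA c (tsRho T b) t (tsSigma T t)
    have i2 : inner ℝ (Lv t (ys (tsSigma T t) + x • w) (yds t + y • w)) w < -κ := by
      refine H (a := (t, ys (tsSigma T t) + x • w, yds t + y • w)) ⟨?_, htT, mem_univ _⟩
      rw [Metric.mem_ball, Prod.dist_eq, Prod.dist_eq, max_lt_iff, max_lt_iff]
      refine ⟨n3, ?_, ?_⟩
      · refine (dist_triangle _ (ys (tsSigma T t)) _).trans_lt ?_
        rw [dist_self_add_left, norm_smul, Real.norm_eq_abs]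
        have := mul_le_mul_of_nonneg_right r1 hw0.le
        linarith only [this, hε5, n1]
      · refine (dist_triangle _ (yds t) _).trans_lt ?_
        rw [dist_self_add_left, norm_smul, Real.norm_eq_abs]
        have := mul_le_mul_of_nonneg_right r3 hw0.le
        linarith only [this, hε6, n2]
    set I1 := inner ℝ (Ly t (ys (tsSigma T t) + x • w) (yds t + y • w)) w
    set I2 := inner ℝ (Lv t (ys (tsSigma T t) + x • w) (yds t + y • w)) w
    set P := rampP c (tsRho T b) (tsSigma T t)
    set A := rampA c (tsRho T b) t (tsSigma T t)
    rw [← mul_neg]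
    refine mul_le_mul_of_nonneg_left ?_ hε.le
    have k1 : P * I1 ≤ P * M' := mul_le_mul_of_nonneg_left i1 p0
    have k2 : P * M' ≤ 2 * (tsRho T b - c) * A * M' := mul_le_mul_of_nonneg_right p1 hM'0
    have k3 : 2 * (tsRho T b - c) * A * M' ≤ A * (κ / 2) := by
      have : 2 * (tsRho T b - c) * M' ≤ κ / 2 := by
        rw [hrb]
        have : (b - c) * M' ≤ θ * M' := mul_le_mul_of_nonneg_right (by linarith) hM'0
        linarith
      have := mul_le_mul_of_nonneg_left this q0
      linarith
    have k4 : A * I2 ≤ A * (-κ) := mul_le_mul_of_nonneg_left i2.le q0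
    linarith
  have hD0 : ∀ t ∈ tsTk T, lagD T b L ys yds w c ε t ≤ 0 := by
    intro t ht
    rcases lt_or_ge t c with h1 | h1
    · have h2 := sig_le hcT h1
      unfold lagD
      rw [rampP_zero hcr h2, rampA_zero hcr (sig_ge _ _) h2]
      simp
    · refine (hD t ht h1).trans ?_
      have q0 := rampA_nonneg (c := c) (r := tsRho T b) t (tsSigma T t)
      have : 0 ≤ ε * (rampA c (tsRho T b) t (tsSigma T t) * (κ / 2)) := by positivity
      linarith
  have hq : 0 < rampQ c (tsRho T b) d := by
    rw [rampQ_mid hcr hd1.le (by rw [hrb]; exact hdb.le)]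
    exact div_pos (by linarith) (by linarith)
  have had : a ≤ d := h.a_le hdT
  have hdK : d ∈ tsTk T := h.mem_Tk.2 ⟨hdT, by rw [hrb]; exact hdb.le⟩
  rw [← intervalIntegral.integral_add_adjacent_intervals (hi a d) (hi d b)] at hk
  have j1 := int_bd had (hi a d) (C := 0) (fun u hu => hD0 _ (h.pi_mem u))
  have j2 := int_bd hdb.le (hi d b) (C := -(ε * (rampQ c (tsRho T b) d * (κ / 2))))
    (fun u hu => by
      have h1 := h.le_pi hdK hu.1.le
      refine (hD _ (h.pi_mem u) (hd1.le.trans h1)).trans ?_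
      have h2 := (rampQ_mono hcr h1).trans (rampA_geQ hcr (sig_ge T (tsPi T a u)))
      have h3 := mul_le_mul_of_nonneg_right h2 (by positivity : 0 ≤ κ / 2)
      have h4 := mul_le_mul_of_nonneg_left h3 hε.le
      linarith)
  have : 0 < (b - d) * (ε * (rampQ c (tsRho T b) d * (κ / 2))) :=
    mul_pos (by linarith) (by positivity)
  linarith

end final


theorem transversality_sigma_form_right_endpoint_free
    {n : ℕ} (hn : 1 ≤ n)
    (T₀ : Set ℝ) (hT₀closed : IsClosed T₀)
    (a b : ℝ) (ha : a ∈ T₀) (hb : b ∈ T₀) (hab : a < b)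
    (T : Set ℝ) (hT : T = Icc a b ∩ T₀)
    (hT3 : ∃ c ∈ T, c ≠ a ∧ c ≠ b)
    (L : ℝ → En n → En n → ℝ) (Ly Lv : ℝ → En n → En n → En n)
    (hLc : ContinuousOn (fun p : ℝ × En n × En n => L p.1 p.2.1 p.2.2)
      (T ×ˢ (univ : Set (En n × En n))))
    (hLC2 : ∀ t ∈ T, ContDiff ℝ 2 (fun p : En n × En n => L t p.1 p.2))
    (hLy : ∀ t ∈ T, ∀ y v : En n, HasGradientAt (fun z => L t z v) (Ly t y v) y)
    (hLv : ∀ t ∈ T, ∀ y v : En n, HasGradientAt (fun z => L t y z) (Lv t y v) v)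
    (hLyc : ContinuousOn (fun p : ℝ × En n × En n => Ly p.1 p.2.1 p.2.2)
      (T ×ˢ (univ : Set (En n × En n))))
    (hLvc : ContinuousOn (fun p : ℝ × En n × En n => Lv p.1 p.2.1 p.2.2)
      (T ×ˢ (univ : Set (En n × En n))))
    (ys yds : ℝ → En n) (hys : C1rd T ys yds)
    (hmin : ∃ δ > 0, ∀ y yd : ℝ → En n, C1rd T y yd →
      y a = ys a →
      tsSupNorm (tsTk T) (fun t => y t - ys t)
        + tsSupNorm (tsTk T) (fun t => yd t - yds t) < δ →
      ∀ F G : ℝ → ℝ,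
        IsDeltaAntideriv T (fun t => L t (ys (tsSigma T t)) (yds t)) F →
        IsDeltaAntideriv T (fun t => L t (y (tsSigma T t)) (yd t)) G →
        F b - F a ≤ G b - G a) :
    tsMu T (tsRho T b) • Ly (tsRho T b) (ys b) (yds (tsRho T b))
      + Lv (tsRho T b) (ys b) (yds (tsRho T b)) = 0 := by

  obtain ⟨δ, hδ, hm⟩ := hmin
  have h : TSc T a b := by
    subst hT
    refine ⟨isCompact_Icc.inter_right hT₀closed, ⟨⟨⟨le_rfl, hab.le⟩, ha⟩, fun x hx => hx.1.1⟩,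
      ⟨⟨⟨hab.le, le_rfl⟩, hb⟩, fun x hx => hx.1.2⟩, hab⟩
  have hL : Lag T L Ly Lv := ⟨hLc, hLC2, hLy, hLv, hLyc, hLvc⟩
  obtain ⟨c, hcT, hca, hcb⟩ := hT3
  have har : a < tsRho T b :=
    lt_of_lt_of_le (lt_of_le_of_ne (h.least.2 hcT) (Ne.symm hca))
      (le_rho hcT (lt_of_le_of_ne (h.great.2 hcT) hcb))
  unfold tsMu
  rw [h.sig_rho]
  rcases eq_or_lt_of_le (rho_le T b) with h1 | h1
  · rw [h1, sub_self, zero_smul, zero_add]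
    exact case2 h hL hys hδ hm h1
  · exact case1 h hL hys hδ hm har h1
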